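/- Let k ≥ 5, n ≥ k, and let f : F_2^n → {0,1} satisfy f(0)=1, f̂(0) = 1/2^{k−1}, with all other Fourier coefficients in {0, ±1/2^k}. Then for B = {β : f̂(β) = −1/2^k}: the linear span of B has size 2^k = 2(|B|+1), and B+B is a linear subspace of F_2^n of dimension k−1. -/

import Mathlib

open Finset Pointwise

/-- The Fourier coefficient `f̂(α) = E_x[f(x)·(-1)^⟨α,x⟩]` of `f : F_2^n → ℝ`. -/
noncomputable def fc {n : ℕ} (f : (Fin n → ZMod 2) → ℝ) (α : Fin n → ZMod 2) : ℝ :=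
  (∑ x : Fin n → ZMod 2, f x * (-1 : ℝ) ^ (∑ i, α i * x i : ZMod 2).val) / 2 ^ n

/-!
Put `F = 2 ^ k * f̂`, `B = {F = -1}` and `M = B ∪ {0}`. Since `f ^ 2 = f`, the function `F` has
autocorrelation `2 ^ k * F`; as `F` takes few values this gives `#M = 2 ^ (k - 1)` and
`F (a + b) = 1` for distinct `a, b ∈ B`. The same holds for `F * ψ`, the spectrum of a translate of
`f`, whenever `ψ` is the character of a point of the support of `f`.

Such a `ψ` splits `B` into `Z = {ψ = 1}` and `X = {ψ = -1}`, and every translate of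
`Y = {F * ψ = -1, ψ = -1}` by an element of `Z` is `X`. So `Z` lies in one coset of the subspace of
periods of `X`, whose order divides `#X`; hence `p = #Z + 1`, the number of points of `M` where
`ψ = 1`, is a power of two. If `p = 2 ^ (k - 2)`, then `Z` is a coset of the periods minus one point
and `X` is another coset, so `B` is a coset `e + W` minus `e`.

Averaging over the support of `f` expresses the first two moments of `p` through the values of `F`
on `M` and `M + M`. If `p` avoided `2 ^ (k - 2)`, these moments would contradict the fact that the
`ψ` with `p = 2 ^ (k - 1)` come from a subgroup of `F_2 ^ n`, hence number a power of two.
-/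

section Moments

variable {ι : Type*}

lemma card_filter_eq_mul_sq_le_sum (S : Finset ι) (p : ι → ℝ) (v c : ℝ) :
    #{i ∈ S | p i = v} * (v - c) ^ 2 ≤ ∑ i ∈ S, (p i - c) ^ 2 := by
  calc #{i ∈ S | p i = v} * (v - c) ^ 2
      = ∑ i ∈ S with p i = v, (p i - c) ^ 2 := by
        rw [sum_congr rfl fun i hi => by rw [(mem_filter.1 hi).2], sum_const, nsmul_eq_mul]
    _ ≤ ∑ i ∈ S, (p i - c) ^ 2 :=
        sum_le_sum_of_subset_of_nonneg (filter_subset _ _) fun i _ _ => sq_nonneg _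

variable {S : Finset ι} {p : ι → ℝ} {L τ : ℝ}

lemma mul_card_filter_eq_le_of_moments (hL : 1 < L) (hcard : (#S : ℝ) = 2 * τ)
    (hsum : ∑ i ∈ S, p i = τ * (L + 3) / 2)
    (hsq : ∑ i ∈ S, p i ^ 2 = τ * (L ^ 2 + 3 * L + 4) / 4) :
    144 * (L - 1) * #{i ∈ S | p i = L} ≤ τ * (29 * L + 20) := by
  -- The centre `(L + 6) / 7` is the best one when `#{i ∈ S | p i = L} = τ / 4`.
  have hle := card_filter_eq_mul_sq_le_sum S p L ((L + 6) / 7)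
  have hexpand (i : ι) : (p i - (L + 6) / 7) ^ 2 =
      p i ^ 2 - 2 * ((L + 6) / 7) * p i + ((L + 6) / 7) ^ 2 := by ring
  simp_rw [hexpand, sum_add_distrib, sum_sub_distrib, ← mul_sum, sum_const, nsmul_eq_mul,
    hsum, hsq, hcard] at hle
  have hfactor : (L - 1) * (144 * (L - 1) * #{i ∈ S | p i = L}) ≤
      (L - 1) * (τ * (29 * L + 20)) := by linarith
  exact le_of_mul_le_mul_left hfactor (by linarith)

lemma mul_le_card_filter_eq_of_moments (hL : 1 < L)
    (hp : ∀ i ∈ S, p i = L ∨ 1 ≤ p i ∧ p i ≤ L / 4) (hcard : (#S : ℝ) = 2 * τ)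
    (hsum : ∑ i ∈ S, p i = τ * (L + 3) / 2)
    (hsq : ∑ i ∈ S, p i ^ 2 = τ * (L ^ 2 + 3 * L + 4) / 4) :
    τ * (L + 4) ≤ 6 * L * #{i ∈ S | p i = L} := by
  have hpoint : ∀ i ∈ S, (p i - 1) * (p i - L / 4) ≤
      if p i = L then (L - 1) * (3 * L / 4) else 0 := by
    intro i hi
    split_ifs with h
    · rw [h]
      linarith
    · obtain ⟨hlower, hupper⟩ := (hp i hi).resolve_left h
      exact mul_nonpos_of_nonneg_of_nonpos (by linarith) (by linarith)
  have hle := sum_le_sum hpoint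
  have hexpand (i : ι) : (p i - 1) * (p i - L / 4) = p i ^ 2 - (1 + L / 4) * p i + L / 4 := by
    ring
  simp_rw [hexpand, sum_add_distrib, sum_sub_distrib, ← mul_sum, sum_const, nsmul_eq_mul,
    ← sum_filter, sum_const, nsmul_eq_mul, hsum, hsq, hcard] at hle
  have hfactor : (L - 1) * (τ * (L + 4)) ≤ (L - 1) * (6 * L * #{i ∈ S | p i = L}) := by linarith
  exact le_of_mul_le_mul_left hfactor (by linarith)

/-- If no `p i` equals `L / 2`, then the two bounds above read `2 ^ t < 8 * 2 ^ j` and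
`4 * 2 ^ j < 2 ^ t`. -/
lemma exists_eq_half_of_moments (hL : 8 < L) {t j : ℕ}
    (hp : ∀ i ∈ S, p i = L ∨ p i = L / 2 ∨ 1 ≤ p i ∧ p i ≤ L / 4) (hcard : #S = 2 * 2 ^ t)
    (hsum : ∑ i ∈ S, p i = 2 ^ t * (L + 3) / 2)
    (hsq : ∑ i ∈ S, p i ^ 2 = 2 ^ t * (L ^ 2 + 3 * L + 4) / 4)
    (hj : #{i ∈ S | p i = L} = 2 ^ j) : ∃ i ∈ S, p i = L / 2 := by
  by_contra! hhalf
  have hcard_real : (#S : ℝ) = 2 * 2 ^ t := mod_cast hcard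
  have hj_real : (#{i ∈ S | p i = L} : ℝ) = 2 ^ j := mod_cast hj
  have hfew : 144 * (L - 1) * 2 ^ j ≤ 2 ^ t * (29 * L + 20) :=
    hj_real ▸ mul_card_filter_eq_le_of_moments (by linarith) hcard_real hsum hsq
  have hmany : 2 ^ t * (L + 4) ≤ 6 * L * 2 ^ j :=
    hj_real ▸ mul_le_card_filter_eq_of_moments (by linarith)
      (fun i hi => (hp i hi).imp_right fun h => h.resolve_left (hhalf i hi)) hcard_real hsum hsq
  have hjpos : (0 : ℝ) < 2 ^ j := by positivity
  obtain htj | htj := le_or_gt t (j + 2)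
  · have hpow : (2 : ℝ) ^ t ≤ 4 * 2 ^ j := by
      rw [show (4 : ℝ) = 2 ^ 2 by norm_num, ← pow_add, add_comm 2]
      exact pow_le_pow_right₀ one_le_two htj
    nlinarith
  · have hpow : (8 : ℝ) * 2 ^ j ≤ 2 ^ t := by
      rw [show (8 : ℝ) = 2 ^ 3 by norm_num, ← pow_add, add_comm 3]
      exact pow_le_pow_right₀ one_le_two htj
    nlinarith

end Moments

section Cosets

lemma exists_insert_eq_vadd {R V : Type*} [Ring R] [AddCommGroup V] [Module R V] [Finite V]
    {K : Submodule R V} {Z : Set V} (hne : Z.Nonempty)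
    (hcard : Z.ncard + 1 = Nat.card K) (hsub : ∀ z ∈ Z, ∀ z' ∈ Z, z - z' ∈ K) :
    ∃ e ∉ Z, insert e Z = e +ᵥ (K : Set V) := by
  obtain ⟨z, hz⟩ := hne
  have hZ : Z ⊆ z +ᵥ (K : Set V) := fun z' hz' =>
    (mem_leftAddCoset_iff z).2 (by simpa [neg_add_eq_sub] using hsub z' hz' z hz)
  have hncard : Z.ncard + 1 = (z +ᵥ (K : Set V)).ncard := by
    rw [Set.ncard_vadd_set, hcard, ← Nat.card_coe_set_eq, SetLike.coe_sort_coe]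
  obtain ⟨e, he, heZ⟩ := (Set.exists_eq_insert_iff_ncard Z.toFinite).2 ⟨hZ, hncard⟩
  have hze : e ∈ z +ᵥ (K : Set V) := heZ ▸ Set.mem_insert e Z
  refine ⟨e, he, heZ.trans ?_⟩
  exact (leftAddCoset_eq_iff K.toAddSubgroup).2 ((mem_leftAddCoset_iff z).1 hze)

variable {V : Type*} [AddCommGroup V] [Module (ZMod 2) V]

/-- The coset `e + W` of a subspace with its representative `e` removed; the set `B` of the theorem
turns out to be of this form, with `e ∉ W`. -/
def puncturedCoset (W : Submodule (ZMod 2) V) (e : V) : Set V := (e +ᵥ (W : Set V)) \ {e}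

lemma add_mem_puncturedCoset {W : Submodule (ZMod 2) V} {e w : V} :
    e + w ∈ puncturedCoset W e ↔ w ∈ W ∧ w ≠ 0 := by
  simp [puncturedCoset, mem_leftAddCoset_iff]

lemma mem_sup_span_singleton_iff {K : Submodule (ZMod 2) V} {c w : V} :
    w ∈ K ⊔ Submodule.span (ZMod 2) {c} ↔ w ∈ K ∨ w + c ∈ K := by
  rw [Submodule.mem_sup]
  constructor
  · rintro ⟨y, hy, z, hz, rfl⟩
    obtain ⟨t, rfl⟩ := Submodule.mem_span_singleton.1 hz
    obtain rfl | rfl := (by decide : ∀ t : ZMod 2, t = 0 ∨ t = 1) t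
    · exact Or.inl (by simpa using hy)
    · exact Or.inr (by simpa [add_assoc, ZModModule.add_self] using hy)
  · rintro (hw | hw)
    · exact ⟨w, hw, 0, Submodule.zero_mem _, add_zero w⟩
    · exact ⟨w + c, hw, c, Submodule.mem_span_singleton_self c, by
        simp [add_assoc, ZModModule.add_self]⟩

lemma vadd_union_vadd (K : Submodule (ZMod 2) V) (e x : V) :
    (e +ᵥ (K : Set V)) ∪ (x +ᵥ (K : Set V)) =
      e +ᵥ ((K ⊔ Submodule.span (ZMod 2) {e + x} : Submodule (ZMod 2) V) : Set V) := by
  ext w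
  simp only [Set.mem_union, mem_leftAddCoset_iff, SetLike.mem_coe, mem_sup_span_singleton_iff,
    ZModModule.neg_eq_self]
  rw [show e + w + (e + x) = x + w by
    rw [add_comm e w, ZModModule.add_add_add_cancel, add_comm]]

lemma exists_union_eq_puncturedCoset [Finite V] {K : Submodule (ZMod 2) V} {Z X : Set V} {x : V}
    (hne : Z.Nonempty) (hcard : Z.ncard + 1 = Nat.card K)
    (hsub : ∀ z ∈ Z, ∀ z' ∈ Z, z - z' ∈ K) (hX : X = x +ᵥ (K : Set V)) (hdisj : Disjoint Z X) :
    ∃ (W : Submodule (ZMod 2) V) (e : V), Module.finrank (ZMod 2) W =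
      Module.finrank (ZMod 2) K + 1 ∧ Z ∪ X = puncturedCoset W e := by
  obtain ⟨e, heZ, hZ⟩ := exists_insert_eq_vadd hne hcard hsub
  have hex : -e + x ∉ K := by
    intro h
    obtain ⟨z, hz⟩ := hne
    have hZX : insert e Z = X := by
      rw [hZ, hX]
      exact (leftAddCoset_eq_iff K.toAddSubgroup).2 h
    exact Set.disjoint_left.1 hdisj hz (hZX ▸ Set.mem_insert_of_mem e hz)
  have heX : e ∉ X := by
    rw [hX, mem_leftAddCoset_iff]
    intro h
    exact hex (by simpa using K.neg_mem h)
  refine ⟨K ⊔ Submodule.span (ZMod 2) {e + x}, e,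
    Submodule.finrank_sup_span_singleton (by rwa [ZModModule.neg_eq_self] at hex), ?_⟩
  rw [puncturedCoset, ← vadd_union_vadd, ← hZ, ← hX, Set.insert_union,
    Set.insert_sdiff_self_of_notMem (by simp [heZ, heX])]

lemma puncturedCoset_add_self {W : Submodule (ZMod 2) V} (hW : 2 < Nat.card W) (e : V) :
    puncturedCoset W e + puncturedCoset W e = W := by
  have cancel (v w : V) : e + v + (e + w) = v + w := by
    rw [add_comm e v, ZModModule.add_add_add_cancel]
  ext w
  rw [SetLike.mem_coe, Set.mem_add]
  constructor
  · rintro ⟨_, ⟨⟨v, hv, rfl⟩, -⟩, _, ⟨⟨v', hv', rfl⟩, -⟩, rfl⟩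
    simpa [cancel] using W.add_mem hv hv'
  · intro hw
    obtain ⟨v, hv, hv0w⟩ : ∃ v ∈ (W : Set V), v ∉ ({0, w} : Set V) :=
      Set.exists_mem_notMem_of_ncard_lt_ncard
        ((Set.ncard_insert_le 0 {w}).trans_lt (by rwa [Set.ncard_singleton]))
    simp only [Set.mem_insert_iff, Set.mem_singleton_iff, not_or] at hv0w
    refine ⟨e + v, add_mem_puncturedCoset.2 ⟨hv, hv0w.1⟩, e + (v - w),
      add_mem_puncturedCoset.2 ⟨W.sub_mem hv hw, sub_ne_zero.2 hv0w.2⟩, ?_⟩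
    rw [cancel, ZModModule.sub_eq_add, ← add_assoc, ZModModule.add_self, zero_add]

lemma span_puncturedCoset {W : Submodule (ZMod 2) V} (hW : 2 < Nat.card W) (e : V) :
    Submodule.span (ZMod 2) (puncturedCoset W e) = W ⊔ Submodule.span (ZMod 2) {e} := by
  set B := puncturedCoset W e
  have hadd : B + B = W := puncturedCoset_add_self hW e
  have hWB : W ≤ Submodule.span (ZMod 2) B := by
    rw [← Submodule.span_eq W, ← hadd, Submodule.span_le]
    rintro _ ⟨a, ha, b, hb, rfl⟩
    exact Submodule.add_mem _ (Submodule.subset_span ha) (Submodule.subset_span hb)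
  obtain ⟨b, hb, -⟩ : (0 : V) ∈ B + B := hadd ▸ W.zero_mem
  have he : e ∈ Submodule.span (ZMod 2) B := by
    have hsub := hWB ((mem_leftAddCoset_iff e).1 hb.1)
    exact (Submodule.neg_mem_iff _).1
      ((Submodule.add_mem_iff_left _ (Submodule.subset_span hb)).1 hsub)
  refine le_antisymm (Submodule.span_le.2 ?_) (sup_le hWB (by simpa using he))
  rintro _ ⟨⟨w, hw, rfl⟩, -⟩
  exact mem_sup_span_singleton_iff.2 <| Or.inr <| by
    simpa [add_right_comm, ZModModule.add_self] using hw

end Cosets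

section Stabilizer

variable {V : Type*} [AddCommGroup V] [DecidableEq V]

lemma card_stabilizer_dvd_card (X : Finset V) : Nat.card (AddAction.stabilizer V X) ∣ #X := by
  have h := AddSubgroup.card_add_eq_card_addSubgroup_add_card_quotient
    (AddAction.stabilizer V (X : Set V)) (X : Set V)
  rw [AddAction.add_stabilizer_self, Nat.card_coe_set_eq, Set.ncard_coe_finset,
    AddAction.stabilizer_coe_finset] at h
  exact Dvd.intro _ h.symm

lemma sub_mem_stabilizer_of_add_subset {X Y Z : Finset V} (hcard : #X = #Y) (h : Z + Y ⊆ X)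
    {z z' : V} (hz : z ∈ Z) (hz' : z' ∈ Z) : z - z' ∈ AddAction.stabilizer V X := by
  have vadd_eq {u : V} (hu : u ∈ Z) : u +ᵥ Y = X :=
    Finset.eq_of_subset_of_card_le ((Finset.vadd_finset_subset_add hu).trans h)
      (by rw [Finset.card_vadd_finset, hcard])
  rw [AddAction.mem_stabilizer_iff, ← vadd_eq hz', vadd_vadd, sub_add_cancel, vadd_eq hz,
    vadd_eq hz']

lemma card_le_card_stabilizer_of_add_subset [Finite V] {X Y Z : Finset V} (hcard : #X = #Y)
    (h : Z + Y ⊆ X) : #Z ≤ Nat.card (AddAction.stabilizer V X) := by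
  obtain rfl | ⟨z, hz⟩ := Z.eq_empty_or_nonempty
  · simp
  have hsub : -z +ᵥ (Z : Set V) ⊆ (AddAction.stabilizer V X : Set V) := by
    rintro _ ⟨z', hz', rfl⟩
    simpa only [vadd_eq_add, neg_add_eq_sub, SetLike.mem_coe] using
      sub_mem_stabilizer_of_add_subset hcard h hz' hz
  calc #Z = (-z +ᵥ (Z : Set V)).ncard := by rw [Set.ncard_vadd_set, Set.ncard_coe_finset]
    _ ≤ (AddAction.stabilizer V X : Set V).ncard := Set.ncard_le_ncard hsub
    _ = Nat.card (AddAction.stabilizer V X) := rfl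

lemma eq_vadd_stabilizer_of_card_eq {X : Finset V}
    (hcard : #X = Nat.card (AddAction.stabilizer V X)) {x : V} (hx : x ∈ X) :
    (X : Set V) = x +ᵥ (AddAction.stabilizer V X : Set V) := by
  have hsub : x +ᵥ (AddAction.stabilizer V X : Set V) ⊆ X := by
    have h := AddAction.vadd_set_stabilizer_subset (Finset.mem_coe.2 hx)
    rwa [AddAction.stabilizer_coe_finset] at h
  refine (Set.eq_of_subset_of_ncard_le hsub ?_ X.finite_toSet).symm
  rw [Set.ncard_vadd_set, Set.ncard_coe_finset, hcard]
  rfl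

/-- The stabilizer of a finite set `X` under translation, as a subspace over `ZMod 2`. -/
def periods [Module (ZMod 2) V] (X : Finset V) : Submodule (ZMod 2) V :=
  AddSubgroup.toZModSubmodule 2 (AddAction.stabilizer V X)

end Stabilizer

section FlatSpectrum

lemma addChar_eq_one_or_neg_one {V : Type*} [AddCommGroup V] [Module (ZMod 2) V]
    (ψ : AddChar V ℝ) (a : V) : ψ a = 1 ∨ ψ a = -1 := by
  rw [← mul_self_eq_one_iff, ← AddChar.map_add_eq_mul, ZModModule.add_self, AddChar.map_zero_eq_one]

variable {V : Type*} [Fintype V]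

/-- The set where `F` takes the value `-1`; for `F = 2 ^ k * f̂` this is the set `B` of the
theorem. -/
noncomputable def negSet (F : V → ℝ) : Finset V := {a | F a = -1}

@[simp] lemma mem_negSet {F : V → ℝ} {a : V} : a ∈ negSet F ↔ F a = -1 := by simp [negSet]

variable [AddCommGroup V]

/-- The defining properties of `F = 2 ^ k * f̂` for a `0/1`-valued `f` with `f 0 = 1`,
`f̂ 0 = 2 / 2 ^ k` and all other coefficients in `{0, ±1 / 2 ^ k}`: the field `sum` encodes
`f 0 = 1`, and `conv` encodes `f * f = f`. -/
structure IsFlatSpectrum (k : ℕ) (F : V → ℝ) : Prop where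
  zero : F 0 = 2
  apply_of_ne : ∀ a, a ≠ 0 → F a = 0 ∨ F a = 1 ∨ F a = -1
  sum : ∑ a, F a = 2 ^ k
  conv : ∀ b, ∑ a, F a * F (a + b) = 2 ^ k * F b

/-- The number of elements of `negSet F ∪ {0}` on which the character `ψ` is `1`, for `F` not
equal to `-1` at `0`. -/
noncomputable def agreeCount (F : V → ℝ) (ψ : AddChar V ℝ) : ℕ := #{a ∈ negSet F | ψ a = 1} + 1

namespace IsFlatSpectrum

variable {k : ℕ} {F : V → ℝ} {ψ : AddChar V ℝ}

lemma zero_notMem_negSet (hF : IsFlatSpectrum k F) : 0 ∉ negSet F := by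
  rw [mem_negSet, hF.zero]
  norm_num

lemma two_mul_card_insert_negSet [DecidableEq V] (hF : IsFlatSpectrum k F) :
    2 * #(insert 0 (negSet F)) = 2 ^ k := by
  have hpoint (a : V) : F a * F a - F a = if a ∈ insert 0 (negSet F) then 2 else 0 := by
    obtain rfl | ha := eq_or_ne a 0
    · norm_num [hF.zero]
    · obtain h | h | h := hF.apply_of_ne a ha <;> norm_num [ha, h]
  have hconv : ∑ a, F a * F a = 2 ^ k * 2 := by simpa [hF.zero] using hF.conv 0
  have hsum : ∑ a, (F a * F a - F a) = 2 * #(insert 0 (negSet F)) := by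
    simp_rw [hpoint, sum_ite_mem, univ_inter, sum_const, nsmul_eq_mul, mul_comm]
  rw [sum_sub_distrib, hconv, hF.sum] at hsum
  exact_mod_cast (by linarith : (2 : ℝ) * #(insert 0 (negSet F)) = 2 ^ k)

lemma card_negSet_add_one (hF : IsFlatSpectrum k F) : #(negSet F) + 1 = 2 ^ (k - 1) := by
  classical
  have h := hF.two_mul_card_insert_negSet
  rw [card_insert_of_notMem hF.zero_notMem_negSet] at h
  cases k with
  | zero => omega
  | succ k => rw [pow_succ] at h; simpa using (by omega : #(negSet F) + 1 = 2 ^ k)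

lemma cast_card_negSet (hF : IsFlatSpectrum k F) : (#(negSet F) : ℝ) = 2 ^ (k - 1) - 1 :=
  eq_sub_of_add_eq (mod_cast hF.card_negSet_add_one)

lemma sum_insert_zero_negSet [DecidableEq V] (hF : IsFlatSpectrum k F) :
    ∑ a ∈ insert 0 (negSet F), F a = 3 - 2 ^ (k - 1) := by
  rw [sum_insert hF.zero_notMem_negSet, hF.zero, sum_congr rfl fun a ha => mem_negSet.1 ha,
    sum_const, nsmul_eq_mul, hF.cast_card_negSet]
  ring

variable [Module (ZMod 2) V]

lemma autocorrelation_add_indicator_nonneg [DecidableEq V] (hF : IsFlatSpectrum k F) {b : V}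
    (hb : b ∈ negSet F) (c : V) :
    0 ≤ F c * F (c + b) + (if c ∈ insert 0 (negSet F) then 1 else 0) +
      if c + b ∈ insert 0 (negSet F) then 1 else 0 := by
  have hb0 : b ≠ 0 := fun h => hF.zero_notMem_negSet (h ▸ hb)
  rw [mem_negSet] at hb
  obtain rfl | hc := eq_or_ne c 0
  · norm_num [hF.zero, hb]
  obtain rfl | hcb := eq_or_ne c b
  · norm_num [ZModModule.add_self, hF.zero, hb]
  have hcb0 : c + b ≠ 0 := by rwa [← ZModModule.sub_eq_add, sub_ne_zero]
  obtain h | h | h := hF.apply_of_ne c hc <;>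
  obtain h' | h' | h' := hF.apply_of_ne (c + b) hcb0 <;>
  norm_num [h, h', hc, hcb0]

/-- The pointwise nonnegative function of `autocorrelation_add_indicator_nonneg` sums to
`2 ^ k * F b + 2 * 2 ^ (k - 1) = 0`, so it vanishes identically. -/
lemma apply_add_eq_one (hF : IsFlatSpectrum k F) {a b : V} (ha : a ∈ negSet F)
    (hb : b ∈ negSet F) (hab : a ≠ b) : F (a + b) = 1 := by
  classical
  have hcard : (2 : ℝ) * #(insert 0 (negSet F)) = 2 ^ k :=
    mod_cast hF.two_mul_card_insert_negSet
  have hshift : ∑ c, (if c + b ∈ insert 0 (negSet F) then (1 : ℝ) else 0) =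
      ∑ c, if c ∈ insert 0 (negSet F) then (1 : ℝ) else 0 :=
    Equiv.sum_comp (Equiv.addRight b) fun c => if c ∈ insert 0 (negSet F) then (1 : ℝ) else 0
  have hsum : ∑ c, (F c * F (c + b) + (if c ∈ insert 0 (negSet F) then 1 else 0) +
      if c + b ∈ insert 0 (negSet F) then 1 else 0) = 0 := by
    rw [sum_add_distrib, sum_add_distrib, hF.conv, hshift, sum_boole, filter_mem_eq_inter,
      univ_inter, mem_negSet.1 hb]
    linarith
  have hzero := (sum_eq_zero_iff_of_nonneg fun c _ =>
    hF.autocorrelation_add_indicator_nonneg hb c).1 hsum a (mem_univ a)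
  have hab0 : a + b ≠ 0 := by rwa [← ZModModule.sub_eq_add, sub_ne_zero]
  obtain h | h | h := hF.apply_of_ne (a + b) hab0
  · norm_num [mem_negSet.1 ha, h, hab0] at hzero
  · exact h
  · norm_num [mem_negSet.1 ha, h, hab0] at hzero

lemma mul_addChar (hF : IsFlatSpectrum k F) (hψ : ∑ a, F a * ψ a = 2 ^ k) :
    IsFlatSpectrum k (F * ⇑ψ) where
  zero := by simp [hF.zero]
  apply_of_ne a ha := by
    obtain h | h | h := hF.apply_of_ne a ha <;>
    obtain h' | h' := addChar_eq_one_or_neg_one ψ a <;>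
    simp [h, h']
  sum := hψ
  conv b := by
    have hsq (a : V) : ψ a * ψ a = 1 := mul_self_eq_one_iff.2 (addChar_eq_one_or_neg_one ψ a)
    calc ∑ a, (F * ⇑ψ) a * (F * ⇑ψ) (a + b)
        = ∑ a, F a * F (a + b) * (ψ a * ψ a) * ψ b := sum_congr rfl fun a _ => by
          simp only [Pi.mul_apply, AddChar.map_add_eq_mul]
          ring
      _ = 2 ^ k * (F * ⇑ψ) b := by
          simp_rw [hsq, mul_one, ← sum_mul, hF.conv, Pi.mul_apply, mul_assoc]

lemma agreeCount_add_card_filter (hF : IsFlatSpectrum k F) (ψ : AddChar V ℝ) :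
    agreeCount F ψ + #{a ∈ negSet F | ψ a = -1} = 2 ^ (k - 1) := by
  have hnot : {a ∈ negSet F | ¬ψ a = 1} = {a ∈ negSet F | ψ a = -1} :=
    filter_congr fun a _ => by obtain h | h := addChar_eq_one_or_neg_one ψ a <;> norm_num [h]
  rw [← hF.card_negSet_add_one, ← card_filter_add_card_filter_not (s := negSet F) (ψ · = 1),
    hnot, agreeCount, add_right_comm]

lemma card_filter_negSet_mul_addChar (hF : IsFlatSpectrum k F) (hψ : ∑ a, F a * ψ a = 2 ^ k) :
    #{a ∈ negSet F | ψ a = -1} = #{a ∈ negSet (F * ⇑ψ) | ψ a = -1} := by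
  have hagree : agreeCount (F * ⇑ψ) ψ = agreeCount F ψ := by
    unfold agreeCount
    congr 2
    ext a
    simp +contextual [and_congr_left_iff]
  have h := hF.agreeCount_add_card_filter ψ
  have h' := (hF.mul_addChar hψ).agreeCount_add_card_filter ψ
  omega

lemma filter_negSet_add_filter_subset [DecidableEq V] (hF : IsFlatSpectrum k F)
    (hψ : ∑ a, F a * ψ a = 2 ^ k) :
    {a ∈ negSet F | ψ a = 1} + {a ∈ negSet (F * ⇑ψ) | ψ a = -1} ⊆
      {a ∈ negSet F | ψ a = -1} := by
  intro _ hc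
  obtain ⟨z, hz, y, hy, rfl⟩ := mem_add.1 hc
  simp only [mem_filter, mem_negSet, Pi.mul_apply] at hz hy
  have hzy : z ≠ y := by
    rintro rfl
    norm_num [hz.2] at hy
  have hadd : ψ (z + y) = -1 := by simp [AddChar.map_add_eq_mul, hz.2, hy.2]
  have hone : (F * ⇑ψ) (z + y) = 1 :=
    (hF.mul_addChar hψ).apply_add_eq_one (by simp [hz]) (mem_negSet.2 hy.1) hzy
  rw [Pi.mul_apply, hadd] at hone
  simp only [mem_filter, mem_negSet]
  exact ⟨by linarith, hadd⟩

lemma agreeCount_eq_card_periods [DecidableEq V] (hF : IsFlatSpectrum k F)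
    (hψ : ∑ a, F a * ψ a = 2 ^ k) (hp : 3 ≤ agreeCount F ψ) (hlt : agreeCount F ψ < 2 ^ (k - 1)) :
    agreeCount F ψ = Nat.card (periods {a ∈ negSet F | ψ a = -1}) := by
  set X : Finset V := {a ∈ negSet F | ψ a = -1}
  have hsum : agreeCount F ψ + #X = 2 ^ (k - 1) := hF.agreeCount_add_card_filter ψ
  have hle : agreeCount F ψ ≤ Nat.card (periods X) + 1 :=
    Nat.succ_le_succ <| card_le_card_stabilizer_of_add_subset
      (hF.card_filter_negSet_mul_addChar hψ) (hF.filter_negSet_add_filter_subset hψ)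
  have hdvd : Nat.card (periods X) ∣ #X := card_stabilizer_dvd_card X
  have hdvd_two_pow : Nat.card (periods X) ∣ 2 ^ (k - 1) := by
    have hXle : Nat.card (periods X) ≤ 2 ^ (k - 1) :=
      (Nat.le_of_dvd (by omega) hdvd).trans (by omega)
    rw [Module.natCard_eq_pow_finrank (K := ZMod 2), Nat.card_zmod] at hXle ⊢
    exact pow_dvd_pow 2 ((Nat.pow_le_pow_iff_right one_lt_two).1 hXle)
  obtain ⟨c, hc⟩ : Nat.card (periods X) ∣ agreeCount F ψ :=
    (Nat.dvd_add_left hdvd).1 (hsum ▸ hdvd_two_pow)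
  obtain _ | _ | c := c
  · omega
  · simpa using hc
  · nlinarith [Nat.zero_le (Nat.card (periods X) * c)]

lemma exists_agreeCount_eq_two_pow (hF : IsFlatSpectrum k F) (hψ : ∑ a, F a * ψ a = 2 ^ k) :
    ∃ r, agreeCount F ψ = 2 ^ r := by
  classical
  have hpos : 1 ≤ agreeCount F ψ := Nat.le_add_left 1 _
  have hle : agreeCount F ψ ≤ 2 ^ (k - 1) :=
    (Nat.le_add_right _ _).trans_eq (hF.agreeCount_add_card_filter ψ)
  obtain heq | hlt := hle.eq_or_lt
  · exact ⟨k - 1, heq⟩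
  obtain hp | hp := le_or_gt 3 (agreeCount F ψ)
  · rw [hF.agreeCount_eq_card_periods hψ hp hlt, Module.natCard_eq_pow_finrank (K := ZMod 2),
      Nat.card_zmod]
    exact ⟨_, rfl⟩
  · obtain h | h : agreeCount F ψ = 1 ∨ agreeCount F ψ = 2 := by omega
    · exact ⟨0, h⟩
    · exact ⟨1, h⟩

lemma exists_negSet_eq_puncturedCoset (hF : IsFlatSpectrum k F) (hψ : ∑ a, F a * ψ a = 2 ^ k)
    (hk : 4 ≤ k) (hp : agreeCount F ψ = 2 ^ (k - 2)) :
    ∃ (W : Submodule (ZMod 2) V) (e : V), Module.finrank (ZMod 2) W = k - 1 ∧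
      (negSet F : Set V) = puncturedCoset W e := by
  classical
  set X : Finset V := {a ∈ negSet F | ψ a = -1} with hXdef
  set Z : Finset V := {a ∈ negSet F | ψ a = 1} with hZdef
  have hfour : 4 ≤ 2 ^ (k - 2) := Nat.pow_le_pow_right (n := 2) two_pos (by omega : 2 ≤ k - 2)
  have hdouble : 2 ^ (k - 1) = 2 * 2 ^ (k - 2) := by rw [← pow_succ']; congr 1; omega
  have hsum : agreeCount F ψ + #X = 2 ^ (k - 1) := hF.agreeCount_add_card_filter ψ
  have hperiods : agreeCount F ψ = Nat.card (periods X) :=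
    hF.agreeCount_eq_card_periods hψ (by omega) (by omega)
  have hrank : Module.finrank (ZMod 2) (periods X) = k - 2 := by
    rw [hp, Module.natCard_eq_pow_finrank (K := ZMod 2), Nat.card_zmod] at hperiods
    exact (Nat.pow_right_injective le_rfl hperiods).symm
  have hZcard : #Z + 1 = agreeCount F ψ := rfl
  obtain ⟨x, hx⟩ : X.Nonempty := card_pos.1 (by omega)
  have hdisj : Disjoint (Z : Set V) X := Set.disjoint_left.2 fun a ha ha' => by
    norm_num [hXdef, (mem_filter.1 ha).2] at ha'
  have hXcard : #X = Nat.card (periods X) := by omega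
  have hX : (X : Set V) = x +ᵥ (periods X : Set V) := eq_vadd_stabilizer_of_card_eq hXcard hx
  obtain ⟨W, e, hW, hunion⟩ := exists_union_eq_puncturedCoset (K := periods X)
    (card_pos.1 (by omega : 0 < #Z)) (by rw [Set.ncard_coe_finset, hZcard, hperiods])
    (fun z hz z' hz' => sub_mem_stabilizer_of_add_subset (hF.card_filter_negSet_mul_addChar hψ)
      (hF.filter_negSet_add_filter_subset hψ) hz hz')
    hX hdisj
  refine ⟨W, e, by omega, ?_⟩
  rw [← hunion, ← coe_union, hZdef, hXdef, ← filter_or,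
    filter_true_of_mem fun a _ => addChar_eq_one_or_neg_one ψ a]

lemma notMem_of_negSet_eq_puncturedCoset (hF : IsFlatSpectrum k F) {W : Submodule (ZMod 2) V}
    {e : V} (hW : 2 < Nat.card W) (hneg : (negSet F : Set V) = puncturedCoset W e) :
    e ∉ W := by
  intro he
  have heW : e +ᵥ (W : Set V) = W := by
    simpa using (leftAddCoset_eq_iff W.toAddSubgroup (x := e) (y := 0)).2 (by simpa using he)
  rw [puncturedCoset, heW] at hneg
  have he0 : e = 0 := by
    by_contra h
    exact hF.zero_notMem_negSet (mem_coe.1 (hneg ▸ ⟨W.zero_mem, Ne.symm h⟩))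
  subst he0
  obtain ⟨a, ha, b, hb, hab⟩ : ((W : Set V) \ {0}).Nontrivial := by
    rw [← Set.one_lt_ncard_iff_nontrivial, Set.ncard_sdiff_singleton_of_mem W.zero_mem]
    exact Nat.lt_sub_of_add_lt hW
  have hmem : a + b ∈ (negSet F : Set V) := by
    rw [hneg]
    refine ⟨W.add_mem ha.1 hb.1, ?_⟩
    rwa [Set.mem_singleton_iff, ← ZModModule.sub_eq_add, sub_eq_zero]
  rw [← hneg] at ha hb
  have hone := hF.apply_add_eq_one ha hb hab
  rw [mem_negSet.1 hmem] at hone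
  norm_num at hone

lemma agreeCount_eq_iff_mul_addChar_eq (hF : IsFlatSpectrum k F) (hψ : ∑ a, F a * ψ a = 2 ^ k) :
    agreeCount F ψ = 2 ^ (k - 1) ↔ F * ⇑ψ = F := by
  set X : Finset V := {a ∈ negSet F | ψ a = -1} with hX
  have hsum : agreeCount F ψ + #X = 2 ^ (k - 1) := hF.agreeCount_add_card_filter ψ
  have hcard : #X = #{a ∈ negSet (F * ⇑ψ) | ψ a = -1} := hF.card_filter_negSet_mul_addChar hψ
  constructor
  · intro hp
    have hX0 : #X = 0 := by omega
    have hY0 := hX0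
    rw [hcard] at hY0
    rw [hX] at hX0
    simp only [card_eq_zero, filter_eq_empty_iff, mem_negSet, Pi.mul_apply] at hX0 hY0
    ext a
    obtain ha | ha := addChar_eq_one_or_neg_one ψ a
    · simp [ha]
    · obtain rfl | ha0 := eq_or_ne a 0
      · simp
      obtain h | h | h := hF.apply_of_ne a ha0
      · simp [h]
      · exact absurd ha (hY0 (by simp [h, ha]))
      · exact absurd ha (hX0 h)
  · intro hfix
    have hX0 : #X = 0 := by
      rw [hX, card_eq_zero, filter_eq_empty_iff]
      intro a ha hψa
      have hmul : F a * ψ a = F a := congrFun hfix a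
      rw [hψa, mem_negSet.1 ha] at hmul
      norm_num at hmul
    omega

lemma sum_insert_zero_negSet_addChar [DecidableEq V] (hF : IsFlatSpectrum k F) (ψ : AddChar V ℝ) :
    ∑ a ∈ insert 0 (negSet F), ψ a = 2 * agreeCount F ψ - 2 ^ (k - 1) := by
  have hpoint (a : V) : ψ a = 2 * (if ψ a = 1 then 1 else 0) - 1 := by
    obtain h | h := addChar_eq_one_or_neg_one ψ a <;> norm_num [h]
  have hneg : ∑ a ∈ negSet F, ψ a = 2 * #{a ∈ negSet F | ψ a = 1} - #(negSet F) := by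
    rw [sum_congr rfl fun a _ => hpoint a, sum_sub_distrib, ← mul_sum, sum_boole]
    simp
  rw [sum_insert hF.zero_notMem_negSet, AddChar.map_zero_eq_one, hneg, hF.cast_card_negSet,
    agreeCount]
  push_cast
  ring

lemma sum_insert_zero_negSet_add [DecidableEq V] (hF : IsFlatSpectrum k F) {a : V}
    (ha : a ∈ negSet F) : ∑ b ∈ insert 0 (negSet F), F (a + b) = 2 ^ (k - 1) - 1 := by
  have hones : ∑ b ∈ (negSet F).erase a, F (a + b) = #(negSet F) - 1 := by
    rw [sum_congr rfl fun b hb => hF.apply_add_eq_one ha (mem_of_mem_erase hb)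
      (ne_of_mem_erase hb).symm, sum_const, nsmul_eq_mul, mul_one,
      ← cast_card_erase_of_mem ha]
  rw [sum_insert hF.zero_notMem_negSet, ← add_sum_erase _ _ ha, hones, add_zero,
    mem_negSet.1 ha, ZModModule.add_self, hF.zero, hF.cast_card_negSet]
  ring

lemma sum_sum_insert_zero_negSet_add [DecidableEq V] (hF : IsFlatSpectrum k F) :
    ∑ a ∈ insert 0 (negSet F), ∑ b ∈ insert 0 (negSet F), F (a + b) =
      (2 ^ (k - 1)) ^ 2 - 3 * 2 ^ (k - 1) + 4 := by
  rw [sum_insert hF.zero_notMem_negSet,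
    sum_congr rfl fun a ha => hF.sum_insert_zero_negSet_add ha,
    sum_const, nsmul_eq_mul, hF.cast_card_negSet]
  simp_rw [zero_add]
  rw [hF.sum_insert_zero_negSet]
  ring

section Moments

variable {ι : Type*} {S : Finset ι} {χ : ι → AddChar V ℝ} {τ : ℝ}

lemma sum_agreeCount (hF : IsFlatSpectrum k F) (hS : ∀ a, ∑ i ∈ S, χ i a = τ * F a) :
    ∑ i ∈ S, (agreeCount F (χ i) : ℝ) = τ * (2 ^ (k - 1) + 3) / 2 := by
  classical
  have hcard : (#S : ℝ) = τ * 2 := by simpa [hF.zero] using hS 0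
  have hsum : ∑ i ∈ S, ∑ a ∈ insert 0 (negSet F), χ i a = τ * (3 - 2 ^ (k - 1)) := by
    rw [sum_comm]
    simp_rw [hS, ← mul_sum, hF.sum_insert_zero_negSet]
  simp_rw [hF.sum_insert_zero_negSet_addChar, sum_sub_distrib, ← mul_sum, sum_const,
    nsmul_eq_mul, hcard] at hsum
  linarith

lemma sum_agreeCount_sq (hF : IsFlatSpectrum k F) (hS : ∀ a, ∑ i ∈ S, χ i a = τ * F a) :
    ∑ i ∈ S, (agreeCount F (χ i) : ℝ) ^ 2 =
      τ * ((2 ^ (k - 1)) ^ 2 + 3 * 2 ^ (k - 1) + 4) / 4 := by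
  classical
  have hcard : (#S : ℝ) = τ * 2 := by simpa [hF.zero] using hS 0
  have hsum : ∑ i ∈ S, (∑ a ∈ insert 0 (negSet F), χ i a) ^ 2 =
      τ * ((2 ^ (k - 1)) ^ 2 - 3 * 2 ^ (k - 1) + 4) := by
    simp_rw [sq (∑ _ ∈ _, _), sum_mul_sum, ← AddChar.map_add_eq_mul]
    rw [sum_comm]
    simp_rw [sum_comm (s := S), hS, ← mul_sum, hF.sum_sum_insert_zero_negSet_add]
  have hexpand (i : ι) : (2 * agreeCount F (χ i) - 2 ^ (k - 1) : ℝ) ^ 2 =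
      4 * (agreeCount F (χ i) : ℝ) ^ 2 - 4 * 2 ^ (k - 1) * agreeCount F (χ i) +
        (2 ^ (k - 1)) ^ 2 := by ring
  simp_rw [hF.sum_insert_zero_negSet_addChar, hexpand, sum_add_distrib, sum_sub_distrib,
    ← mul_sum, sum_const, nsmul_eq_mul, hcard, hF.sum_agreeCount hS] at hsum
  linarith

lemma exists_agreeCount_eq_two_pow_sub_two (hF : IsFlatSpectrum k F) (hk : 5 ≤ k) {t j : ℕ}
    (hS : ∀ a, ∑ i ∈ S, χ i a = 2 ^ t * F a) (hχ : ∀ i ∈ S, ∑ a, F a * χ i a = 2 ^ k)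
    (hj : #{i ∈ S | F * ⇑(χ i) = F} = 2 ^ j) : ∃ i ∈ S, agreeCount F (χ i) = 2 ^ (k - 2) := by
  have hcard : #S = 2 * 2 ^ t := by
    have h : (#S : ℝ) = 2 ^ t * 2 := by simpa [hF.zero] using hS 0
    rw [mul_comm]
    exact_mod_cast h
  have htwo : (2 : ℝ) ^ (k - 1) = 2 * 2 ^ (k - 2) := by rw [← pow_succ']; congr 1; omega
  have hfour : (2 : ℝ) ^ (k - 1) = 4 * 2 ^ (k - 3) := by
    rw [show (4 : ℝ) = 2 ^ 2 by norm_num, ← pow_add]; congr 1; omega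
  have hlarge : (8 : ℝ) < 2 ^ (k - 1) := by
    rw [show (8 : ℝ) = 2 ^ 3 by norm_num]
    exact pow_lt_pow_right₀ one_lt_two (by omega)
  have hvalues : ∀ i ∈ S, (agreeCount F (χ i) : ℝ) = 2 ^ (k - 1) ∨
      (agreeCount F (χ i) : ℝ) = 2 ^ (k - 1) / 2 ∨
      1 ≤ (agreeCount F (χ i) : ℝ) ∧ (agreeCount F (χ i) : ℝ) ≤ 2 ^ (k - 1) / 4 := by
    intro i hi
    obtain ⟨r, hr⟩ := hF.exists_agreeCount_eq_two_pow (hχ i hi)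
    have hr_le : r ≤ k - 1 := (Nat.pow_le_pow_iff_right one_lt_two).1 <|
      hr ▸ (Nat.le_add_right _ _).trans_eq (hF.agreeCount_add_card_filter (χ i))
    rw [hr, Nat.cast_pow, Nat.cast_ofNat]
    obtain rfl | rfl | hr_lt : r = k - 1 ∨ r = k - 2 ∨ r ≤ k - 3 := by omega
    · exact Or.inl rfl
    · exact Or.inr (Or.inl (by linarith))
    · have hpow : (2 : ℝ) ^ r ≤ 2 ^ (k - 3) := pow_le_pow_right₀ one_le_two hr_lt
      exact Or.inr (Or.inr ⟨one_le_pow₀ one_le_two, by linarith⟩)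
  have hfix : #{i ∈ S | (agreeCount F (χ i) : ℝ) = 2 ^ (k - 1)} = 2 ^ j := by
    rw [← hj, filter_congr fun i hi => (hF.agreeCount_eq_iff_mul_addChar_eq (hχ i hi)).symm]
    norm_cast
  obtain ⟨i, hi, hhalf⟩ := exists_eq_half_of_moments hlarge hvalues hcard
    (hF.sum_agreeCount hS) (hF.sum_agreeCount_sq hS) hfix
  have hcast : (agreeCount F (χ i) : ℝ) = 2 ^ (k - 2) := by linarith
  exact ⟨i, hi, mod_cast hcast⟩

end Moments

end IsFlatSpectrum

end FlatSpectrum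

section Fourier

variable {n k : ℕ}

/-- The character `x ↦ (-1) ^ ⟨a, x⟩` of `F_2 ^ n`. -/
noncomputable def chi (a : Fin n → ZMod 2) : AddChar (Fin n → ZMod 2) ℝ :=
  (AddChar.zmodChar 2 neg_one_sq).compAddMonoidHom
    (dotProductBilin (ZMod 2) (ZMod 2) a).toAddMonoidHom

lemma chi_apply (a x : Fin n → ZMod 2) : chi a x = (-1) ^ (∑ i, a i * x i).val := rfl

lemma chi_comm (a x : Fin n → ZMod 2) : chi a x = chi x a := by
  simp_rw [chi_apply, mul_comm]

lemma chi_add_apply (a b x : Fin n → ZMod 2) : chi (a + b) x = chi a x * chi b x := by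
  rw [chi_comm, AddChar.map_add_eq_mul, chi_comm x, chi_comm x]

lemma chi_eq_zero_iff {a : Fin n → ZMod 2} : chi a = 0 ↔ a = 0 := by
  constructor
  · intro h
    ext i
    have hi : (-1 : ℝ) ^ (a i).val = 1 := by
      simpa [chi_apply, Pi.single_apply] using DFunLike.congr_fun h (Pi.single i 1)
    obtain h0 | h1 := (by decide : ∀ t : ZMod 2, t = 0 ∨ t = 1) (a i)
    · exact h0
    · norm_num [h1, ZMod.val_one] at hi
  · rintro rfl
    ext x
    simp [chi_apply]

lemma sum_chi (a : Fin n → ZMod 2) : ∑ x, chi a x = if a = 0 then 2 ^ n else 0 := by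
  simp [AddChar.sum_eq_ite, chi_eq_zero_iff]

lemma sum_mul_chi_eq (f : (Fin n → ZMod 2) → ℝ) (a : Fin n → ZMod 2) :
    ∑ x, f x * chi a x = 2 ^ n * fc f a :=
  (mul_div_cancel₀ _ (by positivity)).symm

lemma sum_fc_mul_chi (f : (Fin n → ZMod 2) → ℝ) (x : Fin n → ZMod 2) :
    ∑ a, fc f a * chi x a = f x := by
  have horth (y : Fin n → ZMod 2) : ∑ a, chi a y * chi x a = if y = x then 2 ^ n else 0 := by
    simp_rw [chi_comm _ y, ← chi_add_apply, sum_chi, ← ZModModule.sub_eq_add, sub_eq_zero]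
  have hscaled : 2 ^ n * ∑ a, fc f a * chi x a = 2 ^ n * f x := by
    simp_rw [mul_sum, ← mul_assoc, ← sum_mul_chi_eq, sum_mul]
    rw [sum_comm]
    simp_rw [mul_assoc, ← mul_sum, horth]
    simp [mul_comm]
  exact mul_left_cancel₀ (by positivity) hscaled

lemma sum_fc_mul_fc_add (f g : (Fin n → ZMod 2) → ℝ) (b : Fin n → ZMod 2) :
    ∑ a, fc f a * fc g (a + b) = fc (f * g) b := by
  have hscaled : 2 ^ n * ∑ a, fc f a * fc g (a + b) = 2 ^ n * fc (f * g) b := by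
    calc 2 ^ n * ∑ a, fc f a * fc g (a + b)
        = ∑ a, ∑ x, fc f a * chi x a * (g x * chi b x) := by
          rw [mul_sum]
          refine sum_congr rfl fun a _ => ?_
          rw [mul_left_comm, ← sum_mul_chi_eq, mul_sum]
          refine sum_congr rfl fun x _ => ?_
          rw [chi_add_apply, chi_comm a]
          ring
      _ = ∑ x, (f * g) x * chi b x := by
          rw [sum_comm]
          simp_rw [← sum_mul, sum_fc_mul_chi, Pi.mul_apply, mul_assoc]
      _ = 2 ^ n * fc (f * g) b := sum_mul_chi_eq _ _
  exact mul_left_cancel₀ (by positivity) hscaled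

lemma isFlatSpectrum_smul_fc {f : (Fin n → ZMod 2) → ℝ} (hk : 1 ≤ k)
    (hf : ∀ x, f x = 0 ∨ f x = 1) (hf0 : f 0 = 1) (h0 : fc f 0 = 1 / 2 ^ (k - 1))
    (h : ∀ a, a ≠ 0 → fc f a = 0 ∨ fc f a = 1 / 2 ^ k ∨ fc f a = -(1 / 2 ^ k)) :
    IsFlatSpectrum k ((2 ^ k : ℝ) • fc f) where
  zero := by
    rw [Pi.smul_apply, h0, smul_eq_mul, ← pow_sub_mul_pow 2 hk]
    field_simp
  apply_of_ne a ha := by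
    obtain h | h | h := h a ha <;> simp [h]
  sum := by
    have hinv := sum_fc_mul_chi f 0
    simp only [chi_eq_zero_iff.2 rfl, AddChar.zero_apply, mul_one, hf0] at hinv
    simp [← mul_sum, hinv]
  conv b := by
    have hff : f * f = f := by
      ext x
      obtain h | h := hf x <;> simp [h]
    have hmul (a : Fin n → ZMod 2) : ((2 ^ k : ℝ) • fc f) a * ((2 ^ k : ℝ) • fc f) (a + b) =
        2 ^ k * 2 ^ k * (fc f a * fc f (a + b)) := mul_mul_mul_comm _ _ _ _
    simp_rw [hmul, ← mul_sum, sum_fc_mul_fc_add, hff, mul_assoc, Pi.smul_apply, smul_eq_mul]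

lemma sum_filter_chi {f : (Fin n → ZMod 2) → ℝ} (hf : ∀ x, f x = 0 ∨ f x = 1)
    (a : Fin n → ZMod 2) : ∑ x with f x = 1, chi x a = 2 ^ n * fc f a := by
  rw [← sum_mul_chi_eq, sum_filter]
  refine sum_congr rfl fun x _ => ?_
  obtain h | h := hf x <;> simp [h, chi_comm x]

lemma exists_card_filter_mul_chi_eq (F : (Fin n → ZMod 2) → ℝ) :
    ∃ j, #{x | F * ⇑(chi x) = F} = 2 ^ j := by
  let K : AddSubgroup (Fin n → ZMod 2) :=
    { carrier := {x | F * ⇑(chi x) = F}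
      zero_mem' := by ext a; simp [chi_eq_zero_iff.2 rfl]
      add_mem' := by
        intro x y hx hy
        ext a
        have hxa : F a * chi x a = F a := congrFun hx a
        have hya : F a * chi y a = F a := congrFun hy a
        simp [chi_add_apply, ← mul_assoc, hxa, hya]
      neg_mem' := by simp [ZModModule.neg_eq_self] }
  have hdvd : Nat.card K ∣ 2 ^ n := by
    simpa [Nat.card_eq_fintype_card] using AddSubgroup.card_addSubgroup_dvd_card K
  obtain ⟨j, -, hj⟩ := (Nat.dvd_prime_pow Nat.prime_two).1 hdvd
  refine ⟨j, hj ▸ ?_⟩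
  rw [← Set.ncard_coe_finset, coe_filter_univ]
  rfl

lemma exists_agreeCount_chi_eq {f : (Fin n → ZMod 2) → ℝ} (hk : 5 ≤ k) (hn : k ≤ n)
    (hf : ∀ x, f x = 0 ∨ f x = 1) (hF : IsFlatSpectrum k ((2 ^ k : ℝ) • fc f)) :
    ∃ x, ∑ a, ((2 ^ k : ℝ) • fc f) a * chi x a = 2 ^ k ∧
      agreeCount ((2 ^ k : ℝ) • fc f) (chi x) = 2 ^ (k - 2) := by
  set F : (Fin n → ZMod 2) → ℝ := (2 ^ k : ℝ) • fc f with hFdef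
  have hinv (x : Fin n → ZMod 2) : ∑ a, F a * chi x a = 2 ^ k * f x := by
    simp_rw [hFdef, Pi.smul_apply, smul_eq_mul, mul_assoc, ← mul_sum, sum_fc_mul_chi]
  have hS (a : Fin n → ZMod 2) : ∑ x with f x = 1, chi x a = 2 ^ (n - k) * F a := by
    rw [sum_filter_chi hf, hFdef, Pi.smul_apply, smul_eq_mul, ← mul_assoc, pow_sub_mul_pow 2 hn]
  have hχ : ∀ x ∈ ({x | f x = 1} : Finset _), ∑ a, F a * chi x a = 2 ^ k := fun x hx => by
    rw [hinv, (mem_filter.1 hx).2, mul_one]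
  obtain ⟨j, hj⟩ := exists_card_filter_mul_chi_eq F
  have hfix : #{x ∈ ({x | f x = 1} : Finset _) | F * ⇑(chi x) = F} = 2 ^ j := by
    rw [← hj, filter_filter]
    congr 1
    refine filter_congr fun x _ => and_iff_right_of_imp fun hx => ?_
    have hpow : (2 : ℝ) ^ k * f x = 2 ^ k * 1 := by
      rw [← hinv, mul_one, ← hF.sum]
      exact sum_congr rfl fun a _ => congrFun hx a
    exact mul_left_cancel₀ (by positivity) hpow
  obtain ⟨x, hx, hp⟩ := hF.exists_agreeCount_eq_two_pow_sub_two hk hS hχ hfix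
  exact ⟨x, hχ x hx, hp⟩

end Fourier

theorem stmt_10 {n k : ℕ} (hk : 5 ≤ k) (hn : k ≤ n) (f : (Fin n → ZMod 2) → ℝ)
    (hf : ∀ x, f x = 0 ∨ f x = 1) (hf0 : f 0 = 1)
    (h0 : fc f 0 = 1 / 2 ^ (k - 1))
    (h : ∀ α : Fin n → ZMod 2, α ≠ 0 →
      fc f α = 0 ∨ fc f α = 1 / 2 ^ k ∨ fc f α = -(1 / 2 ^ k)) :
    Nat.card (Submodule.span (ZMod 2) {β : Fin n → ZMod 2 | fc f β = -(1 / 2 ^ k)}) = 2 ^ k ∧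
    2 ^ k = 2 * ({β : Fin n → ZMod 2 | fc f β = -(1 / 2 ^ k)}.ncard + 1) ∧
    ∃ W : Submodule (ZMod 2) (Fin n → ZMod 2),
      Module.finrank (ZMod 2) W = k - 1 ∧
      {β : Fin n → ZMod 2 | fc f β = -(1 / 2 ^ k)} +
        {β : Fin n → ZMod 2 | fc f β = -(1 / 2 ^ k)} = (W : Set (Fin n → ZMod 2)) := by
  set F : (Fin n → ZMod 2) → ℝ := (2 ^ k : ℝ) • fc f with hFdef
  have hF : IsFlatSpectrum k F := isFlatSpectrum_smul_fc (by omega) hf hf0 h0 h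
  have hB : {β | fc f β = -(1 / 2 ^ k)} = (negSet F : Set (Fin n → ZMod 2)) := by
    ext β
    rw [Set.mem_ofPred_eq, ← neg_div, eq_div_iff (by positivity), mul_comm]
    simp [hFdef]
  obtain ⟨x, hx, hp⟩ := exists_agreeCount_chi_eq hk hn hf hF
  obtain ⟨W, e, hW, hneg⟩ := hF.exists_negSet_eq_puncturedCoset hx (by omega) hp
  have hWcard : 2 < Nat.card W := by
    rw [Module.natCard_eq_pow_finrank (K := ZMod 2), Nat.card_zmod, hW]
    exact lt_self_pow₀ one_lt_two (by omega)
  have he : e ∉ W := hF.notMem_of_negSet_eq_puncturedCoset hWcard hneg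
  rw [hB]
  refine ⟨?_, ?_, W, hW, by rw [hneg, puncturedCoset_add_self hWcard]⟩
  · rw [hneg, span_puncturedCoset hWcard, Module.natCard_eq_pow_finrank (K := ZMod 2),
      Nat.card_zmod, Submodule.finrank_sup_span_singleton he, hW, Nat.sub_add_cancel (by omega)]
  · rw [Set.ncard_coe_finset, hF.card_negSet_add_one, mul_comm, ← pow_succ,
      Nat.sub_add_cancel (by omega)]
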